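/- Let X be a real Banach space with dim X > 1 (i.e. X contains two linearly independent vectors). Then there exists a norm ‖·‖' on X, equivalent to the original norm, such that the Banach space (X, ‖·‖') is not a universal BPB domain space; that is, there exists a real Banach space Y such that the pair ((X,‖·‖'), Y) fails the Bishop–Phelps–Bollobás property. Consequently, the scalar field ℝ is, up to the trivial space, the unique real Banach space which is a universal BPB domain space in every equivalent renorming. -/

import Mathlib

open scoped ENNReal

/-- A pair `(X, Y)` of normed spaces has the Bishop–Phelps–Bollobás property with the
function `η : (0,1) → (0,∞)` (encoded as `η : ℝ → ℝ`, relevant only on `(0,1)`). -/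
def BPBpWith (X Y : Type*) [NormedAddCommGroup X] [NormedSpace ℝ X]
    [NormedAddCommGroup Y] [NormedSpace ℝ Y] (η : ℝ → ℝ) : Prop :=
  ∀ ε ∈ Set.Ioo (0 : ℝ) 1, ∀ (T₀ : X →L[ℝ] Y) (x₀ : X),
    ‖T₀‖ = 1 → ‖x₀‖ = 1 → 1 - η ε < ‖T₀ x₀‖ →
      ∃ (S : X →L[ℝ] Y) (x : X),
        ‖x‖ = 1 ∧ ‖S‖ = 1 ∧ ‖S x‖ = 1 ∧ ‖x - x₀‖ < ε ∧ ‖S - T₀‖ < ε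

/-- The pair `(X, Y)` has the Bishop–Phelps–Bollobás property. -/
def HasBPBp (X Y : Type*) [NormedAddCommGroup X] [NormedSpace ℝ X]
    [NormedAddCommGroup Y] [NormedSpace ℝ Y] : Prop :=
  ∃ η : ℝ → ℝ, (∀ ε ∈ Set.Ioo (0 : ℝ) 1, 0 < η ε) ∧ BPBpWith X Y η

/-!
If `X` has dimension at least two, then `X ≅ ℝ × ker f` for a nonzero functional `f`, and `ker f` is
nontrivial; this gives the renorming `ℝ ⊕₁ ker f`.

Let `Y` be strictly convex and let `S` be a contraction from an `ℓ¹`-sum into `Y` attaining its norm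
at `(a, b)`. Equality in the triangle inequality puts `S (a, 0)` and `S (0, b)` on one ray, so
`‖S (a, -b)‖ = |‖a‖ - ‖b‖|`. Let `a₀`, `b₀`, `u`, `v` be unit vectors and let `T` be an operator of
norm one sending `(a₀, 0)` to `u` and `(0, b₀)` to `v`. If `‖u + v‖` is almost `2`, then `T` almost
attains its norm at `(a₀, b₀) / 2`; if `S` is close to `T` and `(a, b)` is close to `(a₀, b₀) / 2`,
then `(u - v) / 2 = T (a₀, -b₀) / 2` is small. Hence the Bishop–Phelps–Bollobás property
forces `Y` to be uniformly convex, and it remains to exhibit a strictly convex Banach space which is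
not. The norm `‖x‖_∞ + ‖w x‖₂` with nonzero weights `w` tending to zero is strictly convex because
of its second term and almost the sup norm on far coordinates.
-/

open Filter Topology

section LOneSum

variable {W Z Y : Type*} [NormedAddCommGroup W] [NormedSpace ℝ W]
  [NormedAddCommGroup Z] [NormedSpace ℝ Z] [NormedAddCommGroup Y] [NormedSpace ℝ Y]

theorem norm_map_fst_neg_snd_eq [StrictConvexSpace ℝ Y]
    {S : WithLp 1 (W × Z) →L[ℝ] Y} (hS : ‖S‖ ≤ 1) {x : WithLp 1 (W × Z)} (hx : ‖S x‖ = ‖x‖) :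
    ‖S (WithLp.toLp 1 (x.fst, -x.snd))‖ = |‖x.fst‖ - ‖x.snd‖| := by
  set p := S (WithLp.toLp 1 (x.fst, 0))
  set q := S (WithLp.toLp 1 (0, x.snd))
  have hadd : S x = p + q := by
    rw [← map_add, ← WithLp.toLp_add, Prod.mk_add_mk, add_zero, zero_add]
    rfl
  have hsub : S (WithLp.toLp 1 (x.fst, -x.snd)) = p - q := by
    rw [← map_sub, ← WithLp.toLp_sub, Prod.mk_sub_mk, sub_zero, zero_sub]
  have hp : ‖p‖ ≤ ‖x.fst‖ := by
    simpa only [WithLp.norm_toLp_fst, one_mul] using S.le_of_opNorm_le hS (WithLp.toLp 1 (x.fst, 0))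
  have hq : ‖q‖ ≤ ‖x.snd‖ := by
    simpa only [WithLp.norm_toLp_snd, one_mul] using S.le_of_opNorm_le hS (WithLp.toLp 1 (0, x.snd))
  rw [hadd, WithLp.prod_norm_eq_of_L1] at hx
  have htri := norm_add_le p q
  have hray : SameRay ℝ p q := sameRay_iff_norm_add.2 (by linarith)
  rw [hsub, hray.norm_sub, show ‖p‖ = ‖x.fst‖ by linarith, show ‖q‖ = ‖x.snd‖ by linarith]

theorem exists_norm_eq_one_map_toLp_smul_smul {a : W} {b : Z} {u v : Y}
    (ha : ‖a‖ = 1) (hb : ‖b‖ = 1) (hu : ‖u‖ = 1) (hv : ‖v‖ = 1) :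
    ∃ T : WithLp 1 (W × Z) →L[ℝ] Y,
      ‖T‖ = 1 ∧ ∀ s t : ℝ, T (WithLp.toLp 1 (s • a, t • b)) = s • u + t • v := by
  obtain ⟨f, hf, hfa⟩ := exists_dual_vector'' ℝ a
  obtain ⟨g, hg, hgb⟩ := exists_dual_vector'' ℝ b
  let T : WithLp 1 (W × Z) →L[ℝ] Y :=
    (f.comp (WithLp.fstL 1 ℝ W Z)).smulRight u + (g.comp (WithLp.sndL 1 ℝ W Z)).smulRight v
  have hT : ∀ s t : ℝ, T (WithLp.toLp 1 (s • a, t • b)) = s • u + t • v := fun s t => by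
    simp [T, hfa, hgb, ha, hb]
  refine ⟨T, le_antisymm (T.opNorm_le_bound zero_le_one fun x => ?_) ?_, hT⟩
  · calc ‖f x.fst • u + g x.snd • v‖ ≤ ‖f x.fst • u‖ + ‖g x.snd • v‖ := norm_add_le _ _
      _ = ‖f x.fst‖ + ‖g x.snd‖ := by simp only [norm_smul, hu, hv, mul_one]
      _ ≤ 1 * ‖x.fst‖ + 1 * ‖x.snd‖ := add_le_add (f.le_of_opNorm_le hf _) (g.le_of_opNorm_le hg _)
      _ = 1 * ‖x‖ := by rw [WithLp.prod_norm_eq_of_L1]; ring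
  · have hTa : T (WithLp.toLp 1 (a, 0)) = u := by simpa using hT 1 0
    simpa [hTa, ha, hu] using T.le_opNorm (WithLp.toLp 1 (a, 0))

theorem norm_map_fst_neg_snd_le [StrictConvexSpace ℝ Y] {S T : WithLp 1 (W × Z) →L[ℝ] Y}
    {x x₀ : WithLp 1 (W × Z)} (hS : ‖S‖ ≤ 1) (hT : ‖T‖ ≤ 1) (hx : ‖S x‖ = ‖x‖)
    (hx₀ : ‖x₀.fst‖ = ‖x₀.snd‖) :
    ‖T (WithLp.toLp 1 (x₀.fst, -x₀.snd))‖ ≤ 2 * ‖x - x₀‖ + ‖S - T‖ * ‖x‖ := by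
  set y := WithLp.toLp 1 (x.fst, -x.snd)
  set y₀ := WithLp.toLp 1 (x₀.fst, -x₀.snd)
  have hy : ‖y‖ = ‖x‖ := by simp [y, WithLp.prod_norm_eq_of_L1]
  have hyy₀ : ‖y - y₀‖ = ‖x - x₀‖ := by
    simp [y, y₀, WithLp.prod_norm_eq_of_L1, neg_add_eq_sub, norm_sub_rev]
  have hSy : ‖S y‖ ≤ ‖x - x₀‖ := calc
    ‖S y‖ = |(‖x.fst‖ - ‖x₀.fst‖) - (‖x.snd‖ - ‖x₀.snd‖)| := by
      rw [norm_map_fst_neg_snd_eq hS hx, hx₀, sub_sub_sub_cancel_right]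
    _ ≤ |‖x.fst‖ - ‖x₀.fst‖| + |‖x.snd‖ - ‖x₀.snd‖| := abs_sub _ _
    _ ≤ ‖x.fst - x₀.fst‖ + ‖x.snd - x₀.snd‖ :=
      add_le_add (abs_norm_sub_norm_le _ _) (abs_norm_sub_norm_le _ _)
    _ = ‖x - x₀‖ := (WithLp.prod_norm_eq_of_L1 (x - x₀)).symm
  calc ‖T y₀‖ = ‖S y - (S - T) y - T (y - y₀)‖ := by simp
    _ ≤ ‖S y‖ + ‖(S - T) y‖ + ‖T (y - y₀)‖ :=
      (norm_sub_le _ _).trans (add_le_add_left (norm_sub_le _ _) _)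
    _ ≤ ‖x - x₀‖ + ‖S - T‖ * ‖y‖ + 1 * ‖y - y₀‖ :=
      add_le_add_three hSy ((S - T).le_opNorm y) (T.le_of_opNorm_le hT _)
    _ = 2 * ‖x - x₀‖ + ‖S - T‖ * ‖x‖ := by rw [hy, hyy₀]; ring

variable [Nontrivial W] [Nontrivial Z] [StrictConvexSpace ℝ Y]

theorem BPBpWith.norm_sub_lt {η : ℝ → ℝ} (H : BPBpWith (WithLp 1 (W × Z)) Y η) {ε : ℝ}
    (hε : ε ∈ Set.Ioo 0 1) {u v : Y} (hu : ‖u‖ = 1) (hv : ‖v‖ = 1)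
    (huv : 2 * (1 - η ε) < ‖u + v‖) : ‖u - v‖ < 6 * ε := by
  obtain ⟨a, ha⟩ := exists_norm_eq W zero_le_one
  obtain ⟨b, hb⟩ := exists_norm_eq Z zero_le_one
  obtain ⟨T, hT, hTab⟩ := exists_norm_eq_one_map_toLp_smul_smul ha hb hu hv
  let x₀ : WithLp 1 (W × Z) := WithLp.toLp 1 ((1 / 2 : ℝ) • a, (1 / 2 : ℝ) • b)
  have hx₀ : ‖x₀‖ = 1 := by
    norm_num [x₀, WithLp.prod_norm_eq_of_L1, norm_smul, ha, hb]
  have hTx₀ : ‖T x₀‖ = ‖u + v‖ / 2 := by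
    rw [hTab, ← smul_add, norm_smul_of_nonneg one_half_pos.le, one_div_mul_eq_div]
  obtain ⟨S, x, hx, hS, hSx, hxx₀, hST⟩ := H ε hε T x₀ hT hx₀ (by linarith)
  have hTsub : ‖T (WithLp.toLp 1 (x₀.fst, -x₀.snd))‖ = ‖u - v‖ / 2 := by
    rw [show -x₀.snd = (-(1 / 2) : ℝ) • b from (neg_smul _ _).symm,
      show x₀.fst = (1 / 2 : ℝ) • a from rfl, hTab, neg_smul, ← sub_eq_add_neg, ← smul_sub,
      norm_smul_of_nonneg one_half_pos.le, one_div_mul_eq_div]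
  have hle := norm_map_fst_neg_snd_le hS.le hT.le (hSx.trans hx.symm)
    (show ‖x₀.fst‖ = ‖x₀.snd‖ by simp [x₀, norm_smul, ha, hb])
  rw [hTsub, hx] at hle
  linarith

theorem HasBPBp.uniformConvexSpace (H : HasBPBp (WithLp 1 (W × Z)) Y) : UniformConvexSpace Y := by
  obtain ⟨η, hη, H⟩ := H
  refine ⟨fun ε hε => ?_⟩
  have hε' : min (ε / 6) (1 / 2) ∈ Set.Ioo (0 : ℝ) 1 :=
    ⟨by positivity, (min_le_right _ _).trans_lt one_half_lt_one⟩
  refine ⟨2 * η (min (ε / 6) (1 / 2)), mul_pos two_pos (hη _ hε'), fun u hu v hv huv => ?_⟩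
  by_contra! hlt
  have hsub := H.norm_sub_lt hε' hu hv (by linarith)
  linarith [min_le_left (ε / 6) (1 / 2)]

end LOneSum

theorem strictConvexSpace_of_forall_snd_eq_zero {E F : Type*}
    [NormedAddCommGroup E] [NormedSpace ℝ E] [NormedAddCommGroup F] [NormedSpace ℝ F]
    [StrictConvexSpace ℝ F]
    {G : Submodule ℝ (WithLp 1 (E × F))} (hG : ∀ x ∈ G, x.snd = 0 → x = 0) :
    StrictConvexSpace ℝ G := by
  refine StrictConvexSpace.of_norm_add fun x y _ _ hxy => ?_
  let π : G →ₗ[ℝ] F := (WithLp.sndL 1 ℝ E F).toLinearMap.comp G.subtype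
  have hπ : Function.Injective π :=
    (injective_iff_map_eq_zero π).2 fun z hz => Subtype.ext (hG z z.2 hz)
  have hnorm : ∀ z : G, ‖z‖ = ‖(z : WithLp 1 (E × F)).fst‖ + ‖π z‖ := fun z =>
    WithLp.prod_norm_eq_of_L1 (z : WithLp 1 (E × F))
  rw [← hπ.sameRay_map_iff, sameRay_iff_norm_add]
  refine le_antisymm (norm_add_le _ _) ?_
  have hfst := norm_add_le (x : WithLp 1 (E × F)).fst (y : WithLp 1 (E × F)).fst
  have hadd :
      ‖x + y‖ = ‖(x : WithLp 1 (E × F)).fst + (y : WithLp 1 (E × F)).fst‖ + ‖π x + π y‖ := by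
    rw [hnorm, map_add]
    rfl
  linarith [hnorm x, hnorm y]

theorem not_uniformConvexSpace_of_forall_one_lt {Y : Type*} [SeminormedAddCommGroup Y]
    [NormedSpace ℝ Y]
    (h : ∀ r : ℝ, 1 < r → ∃ u v : Y, ‖u‖ ≤ r ∧ ‖v‖ ≤ r ∧ 2 ≤ ‖u - v‖ ∧ 2 ≤ ‖u + v‖) :
    ¬ UniformConvexSpace Y := by
  intro _
  obtain ⟨δ, hδ, hconv⟩ := exists_forall_closed_ball_dist_add_le_two_sub Y one_pos
  set r := 1 + min 1 (δ / 2)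
  have hr : 1 < r := lt_add_of_pos_right 1 (by positivity)
  have hr₀ : 0 < r := one_pos.trans hr
  obtain ⟨u, v, hu, hv, hsub, hadd⟩ := h r hr
  have hscale : ∀ z : Y, ‖r⁻¹ • z‖ = ‖z‖ / r := fun z => by
    rw [norm_smul_of_nonneg (inv_nonneg.2 hr₀.le), inv_mul_eq_div]
  have hle : ‖r⁻¹ • u + r⁻¹ • v‖ ≤ 2 - δ := by
    refine hconv ?_ ?_ ?_
    · rwa [hscale, div_le_one hr₀]
    · rwa [hscale, div_le_one hr₀]
    · rw [← smul_sub, hscale, one_le_div hr₀]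
      linarith [min_le_left 1 (δ / 2)]
  rw [← smul_add, hscale, div_le_iff₀ hr₀] at hle
  have hlt : (2 - δ) * r < 2 := by nlinarith [min_le_right 1 (δ / 2)]
  linarith

theorem lp_norm_single_add_single_le_max {ι : Type*} [DecidableEq ι] {E : ι → Type*}
    [∀ i, NormedAddCommGroup (E i)] {i j : ι} (hij : i ≠ j) (a : E i) (b : E j) :
    ‖lp.single ∞ i a + lp.single ∞ j b‖ ≤ max ‖a‖ ‖b‖ := by
  refine lp.norm_le_of_forall_le (by positivity) fun k => ?_
  rw [lp.coeFn_add, Pi.add_apply, lp.single_apply, lp.single_apply]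
  by_cases hi : k = i
  · subst hi
    simp [hij]
  by_cases hj : k = j
  · subst hj
    simp [hi]
  · simp [hi, hj]

/-- The graph of the partially defined operator of multiplication by `w` from `ℓ^∞(ι)` to `ℓ²(ι)`,
with the `ℓ¹`-sum graph norm: the space of those `x ∈ ℓ^∞(ι)` with `w x ∈ ℓ²(ι)`, normed by
`‖x‖_∞ + ‖w x‖₂`. -/
noncomputable def diagonalGraph {ι : Type*} (w : ι → ℝ) :
    Submodule ℝ (WithLp 1 (lp (fun _ : ι => ℝ) ∞ × lp (fun _ : ι => ℝ) 2)) :=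
  ⨅ i, ((lp.evalCLM ℝ (fun _ : ι => ℝ) 2 i).comp (WithLp.sndL 1 ℝ _ _) -
    w i • (lp.evalCLM ℝ (fun _ : ι => ℝ) ∞ i).comp (WithLp.fstL 1 ℝ _ _)).ker

namespace diagonalGraph

variable {ι : Type*} {w : ι → ℝ}

theorem mem_iff {x : WithLp 1 (lp (fun _ : ι => ℝ) ∞ × lp (fun _ : ι => ℝ) 2)} :
    x ∈ diagonalGraph w ↔ ∀ i, x.snd i = w i * x.fst i := by
  simp only [diagonalGraph, Submodule.mem_iInf, LinearMap.mem_ker, ContinuousLinearMap.coe_coe]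
  exact forall_congr' fun i => sub_eq_zero

instance completeSpace : CompleteSpace (diagonalGraph w) := by
  have hclosed : IsClosed (SetLike.coe (diagonalGraph w)) := by
    rw [diagonalGraph, Submodule.coe_iInf]
    exact isClosed_iInter fun i => ContinuousLinearMap.isClosed_ker _
  exact hclosed.completeSpace_coe

theorem strictConvexSpace (hw : ∀ i, w i ≠ 0) : StrictConvexSpace ℝ (diagonalGraph w) := by
  refine strictConvexSpace_of_forall_snd_eq_zero fun x hx hsnd => ?_
  have hfst : x.fst = 0 := by
    ext i
    have hi := mem_iff.1 hx i
    rw [hsnd] at hi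
    simpa [hw i] using hi.symm
  exact WithLp.ofLp_injective 1 (Prod.ext hfst hsnd)

section Single

variable [DecidableEq ι]

/-- The `i`-th unit vector of `ℓ^∞(ι)`, as an element of `diagonalGraph w`. -/
noncomputable def single (w : ι → ℝ) (i : ι) : diagonalGraph w :=
  ⟨WithLp.toLp 1 (lp.single ∞ i 1, lp.single 2 i (w i)), mem_iff.2 fun k => by
    by_cases hk : k = i
    · subst hk
      simp
    · simp [hk]⟩

theorem norm_single (i : ι) : ‖single w i‖ = 1 + |w i| := by
  rw [Submodule.coe_norm, WithLp.prod_norm_eq_of_L1]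
  change ‖lp.single (E := fun _ : ι => ℝ) ∞ i 1‖ + ‖lp.single (E := fun _ : ι => ℝ) 2 i (w i)‖ = _
  rw [lp.norm_single (by norm_num), lp.norm_single (by norm_num), norm_one, Real.norm_eq_abs]

theorem norm_single_add_smul_single_le {i j : ι} (hij : i ≠ j) {c : ℝ} (hc : |c| ≤ 1) :
    ‖single w i + c • single w j‖ ≤ 1 + (|w i| + |w j|) := by
  have hfst : ‖lp.single (E := fun _ : ι => ℝ) ∞ i 1 + c • lp.single ∞ j 1‖ ≤ 1 := by
    rw [← lp.single_smul]
    exact (lp_norm_single_add_single_le_max hij _ _).trans (by simpa using hc)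
  have hsnd : ‖lp.single (E := fun _ : ι => ℝ) 2 i (w i) + c • lp.single 2 j (w j)‖ ≤
      |w i| + |w j| := by
    refine norm_add_le_of_le (lp.norm_single (by norm_num) _ _).le ?_
    rw [norm_smul, lp.norm_single (by norm_num)]
    exact mul_le_of_le_one_left (norm_nonneg _) hc
  exact (WithLp.prod_norm_eq_of_L1 _).trans_le (add_le_add hfst hsnd)

end Single

theorem not_uniformConvexSpace [Infinite ι] (hw : Tendsto w cofinite (𝓝 0)) :
    ¬ UniformConvexSpace (diagonalGraph w) := by
  classical
  refine not_uniformConvexSpace_of_forall_one_lt fun r hr => ?_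
  have hsmall : ∀ᶠ i in cofinite, |w i| < (r - 1) / 2 :=
    hw.abs.eventually_lt_const (by rw [abs_zero]; linarith)
  obtain ⟨i, hi, j, hj, hij⟩ := (frequently_cofinite_iff_infinite.1 hsmall.frequently).nontrivial
  rw [Set.mem_ofPred_eq] at hi hj
  have hle : ∀ c : ℝ, |c| ≤ 1 → ‖single w i + c • single w j‖ ≤ r := fun c hc =>
    (norm_single_add_smul_single_le hij hc).trans (by linarith)
  have htwo : ∀ k, 2 ≤ ‖(2 : ℝ) • single w k‖ := fun k => by
    rw [norm_smul, norm_single, Real.norm_two]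
    linarith [abs_nonneg (w k)]
  have hsub : (single w i + (1 : ℝ) • single w j) - (single w i + (-1 : ℝ) • single w j) =
      (2 : ℝ) • single w j := by module
  have hadd : (single w i + (1 : ℝ) • single w j) + (single w i + (-1 : ℝ) • single w j) =
      (2 : ℝ) • single w i := by module
  exact ⟨_, _, hle 1 (by simp), hle (-1) (by simp), hsub ▸ htwo j, hadd ▸ htwo i⟩

end diagonalGraph

theorem exists_strictConvexSpace_not_uniformConvexSpace.{v} :
    ∃ (Y : Type v) (_ : NormedAddCommGroup Y) (_ : NormedSpace ℝ Y),
      CompleteSpace Y ∧ StrictConvexSpace ℝ Y ∧ ¬ UniformConvexSpace Y := by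
  let w : ULift.{v} ℕ → ℝ := fun n => 1 / ((n.down : ℝ) + 1)
  have hw : Tendsto w cofinite (𝓝 0) :=
    (Nat.cofinite_eq_atTop ▸ tendsto_one_div_add_atTop_nhds_zero_nat).comp
      ULift.down_injective.tendsto_cofinite
  exact ⟨diagonalGraph w, inferInstance, inferInstance, inferInstance,
    diagonalGraph.strictConvexSpace fun n => Nat.one_div_pos_of_nat.ne',
    diagonalGraph.not_uniformConvexSpace hw⟩

theorem exists_submodule_nontrivial_equiv_real_prod {X : Type*} [NormedAddCommGroup X]
    [NormedSpace ℝ X] (hdim : ∃ x y : X, LinearIndependent ℝ ![x, y]) :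
    ∃ Z : Submodule ℝ X, Nontrivial Z ∧ Nonempty (X ≃L[ℝ] ℝ × Z) := by
  obtain ⟨x, y, hxy⟩ := hdim
  obtain ⟨f, hfx⟩ := SeparatingDual.exists_eq_one (R := ℝ) (show x ≠ 0 from hxy.ne_zero 0)
  have hker : y - f y • x ∈ f.ker := by simp [hfx]
  have hne : y - f y • x ≠ 0 := fun h =>
    one_ne_zero (LinearIndependent.pair_iff.1 hxy (-f y) 1 (by rw [← h]; module)).2
  exact ⟨f.ker, Submodule.nontrivial_iff_ne_bot.2 ((Submodule.ne_bot_iff _).2 ⟨_, hker, hne⟩),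
    ⟨.equivOfRightInverse f (.toSpanSingleton ℝ x) fun t => by simp [hfx]⟩⟩

theorem exists_norm_bounds_of_continuousLinearEquiv {𝕜 E F : Type*}
    [NontriviallyNormedField 𝕜] [SeminormedAddCommGroup E] [NormedSpace 𝕜 E]
    [SeminormedAddCommGroup F] [NormedSpace 𝕜 F] (e : E ≃L[𝕜] F) :
    ∃ c C : ℝ, 0 < c ∧ 0 < C ∧ ∀ x, c * ‖x‖ ≤ ‖e x‖ ∧ ‖e x‖ ≤ C * ‖x‖ := by
  obtain ⟨C, hC, hle⟩ := (e : E →L[𝕜] F).bound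
  obtain ⟨K, hK, hge⟩ := (e.symm : F →L[𝕜] E).bound
  refine ⟨K⁻¹, C, inv_pos.2 hK, hC, fun x => ⟨(inv_mul_le_iff₀ hK).2 ?_, hle x⟩⟩
  simpa using hge (e x)

theorem exists_equivalent_renorming_not_universal_BPB_domain_general.{u, v}
    (X : Type u) [NormedAddCommGroup X] [NormedSpace ℝ X]
    (hdim : ∃ x y : X, LinearIndependent ℝ ![x, y]) :
    ∃ (X' : Type u) (_ : NormedAddCommGroup X') (_ : NormedSpace ℝ X') (_ : X ≃L[ℝ] X')
      (Y : Type v) (_ : NormedAddCommGroup Y) (_ : NormedSpace ℝ Y) (_ : CompleteSpace Y),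
      ¬ HasBPBp X' Y := by
  obtain ⟨Z, _, ⟨e⟩⟩ := exists_submodule_nontrivial_equiv_real_prod hdim
  obtain ⟨Y, _, _, _, _, hY⟩ := exists_strictConvexSpace_not_uniformConvexSpace.{v}
  exact ⟨WithLp 1 (ℝ × Z), inferInstance, inferInstance,
    e.trans (WithLp.prodContinuousLinearEquiv 1 ℝ ℝ Z).symm, Y, inferInstance, inferInstance,
    inferInstance, fun H => hY H.uniformConvexSpace⟩

/-- Every real Banach space of dimension greater than one admits an equivalent norm for which
it is not a universal BPB domain space: there are a Banach space `X'`, a linear isomorphism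
`e : X ≃ₗ[ℝ] X'` whose norm is equivalent to the original one (so `X'` is `X` with an
equivalent renorming), and a Banach space `Y` such that `(X', Y)` fails the BPBp. -/
theorem exists_equivalent_renorming_not_universal_BPB_domain.{u}
    (X : Type u) [NormedAddCommGroup X] [NormedSpace ℝ X] [CompleteSpace X]
    (hdim : ∃ x y : X, LinearIndependent ℝ ![x, y]) :
    ∃ (X' : Type u) (_ : NormedAddCommGroup X') (_ : NormedSpace ℝ X') (_ : CompleteSpace X')
      (e : X ≃ₗ[ℝ] X') (c C : ℝ), 0 < c ∧ 0 < C ∧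
      (∀ x : X, c * ‖x‖ ≤ ‖e x‖ ∧ ‖e x‖ ≤ C * ‖x‖) ∧
      ∃ (Y : Type u) (_ : NormedAddCommGroup Y) (_ : NormedSpace ℝ Y) (_ : CompleteSpace Y),
        ¬ HasBPBp X' Y := by
  obtain ⟨X', _, _, e, hY⟩ :=
    exists_equivalent_renorming_not_universal_BPB_domain_general.{u, u} X hdim
  obtain ⟨c, C, hc, hC, hbound⟩ := exists_norm_bounds_of_continuousLinearEquiv e
  exact ⟨X', _, _, e.isUniformEmbedding.completeSpace_congr e.surjective |>.1 ‹_›, e.toLinearEquiv,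
    c, C, hc, hC, hbound, hY⟩
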